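/- (Corollary 1, equation (16)) If u_1^† R u_3 ≠ 0, then exp(j·ε_tx,K) = (u_1^† R u_1) / (u_1^† R u_3). -/

import Mathlib

open scoped BigOperators

/-- Steering vector `a(ε) ∈ ℂ^{n+1}` with entries `exp(j·i·ε)`, `i = 0,…,n`. -/
noncomputable def steer (n : ℕ) (ε : ℝ) : Fin (n + 1) → ℂ :=
  fun i => Complex.exp (Complex.I * ((i : ℕ) : ℂ) * (ε : ℂ))

/-- The vector `E(η_1,…,η_m) ∈ ℂ^{m+1}` defined recursively by
`E(η_1) = (1, −exp(j·η_1))` and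
`E(η_1,…,η_p) = (E(η_1,…,η_{p−1}), 0) − exp(j·η_p)·(0, E(η_1,…,η_{p−1}))`
(with base case `E() = (1)`, which reproduces the stated base case at `m = 1`). -/
noncomputable def Evec : (m : ℕ) → (Fin m → ℝ) → (Fin (m + 1) → ℂ)
  | 0, _ => fun _ => 1
  | m + 1, η => fun i =>
      Fin.snoc (α := fun _ => ℂ) (Evec m fun j => η j.castSucc) 0 i -
        Complex.exp (Complex.I * (η (Fin.last m) : ℂ)) *
          Fin.cons (α := fun _ => ℂ) 0 (Evec m fun j => η j.castSucc) i

/-- The cyclic down-shift matrix on `ℂ^{n+1}`: `(Lv)_0 = v_n`, `(Lv)_i = v_{i−1}` for `i ≥ 1`. -/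
def Lmat (n : ℕ) : Matrix (Fin (n + 1)) (Fin (n + 1)) ℂ :=
  Matrix.of fun i l => if l = i - 1 then 1 else 0

/-- Kronecker product of vectors: `(v ⊗ w)_{(i,l)} = v_i · w_l`. -/
def kron {a b : Type*} (v : a → ℂ) (w : b → ℂ) : a × b → ℂ :=
  fun p => v p.1 * w p.2

/-- `x^† y = Σ_i conj(x_i) · y_i`. -/
noncomputable def ip {n : Type*} [Fintype n] (x y : n → ℂ) : ℂ :=
  ∑ i, (starRingEnd ℂ) (x i) * y i

/-- `x^† M y = Σ_{i,l} conj(x_i) · M_{i,l} · y_l`. -/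
noncomputable def qf {n : Type*} [Fintype n] (x : n → ℂ) (M : Matrix n n ℂ) (y : n → ℂ) : ℂ :=
  ∑ i, ∑ l, (starRingEnd ℂ) (x i) * M i l * y l

/-- `E(η_1,…,η_Kp) ∈ ℂ^{Kp+1}` padded with a trailing zero, giving a vector in `ℂ^{Kp+2}`. -/
noncomputable def Epad (Kp : ℕ) (η : Fin Kp → ℝ) : Fin (Kp + 2) → ℂ :=
  Fin.snoc (Evec Kp η) 0

/-- `u_0 = Ẽ_tx ⊗ Ẽ_rx`. -/
noncomputable def u0 (Kp : ℕ) (ηt ηr : Fin Kp → ℝ) : Fin (Kp + 2) × Fin (Kp + 2) → ℂ :=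
  kron (Epad Kp ηt) (Epad Kp ηr)

/-- `u_1 = Ẽ_tx ⊗ (L·Ẽ_rx)`. -/
noncomputable def u1 (Kp : ℕ) (ηt ηr : Fin Kp → ℝ) : Fin (Kp + 2) × Fin (Kp + 2) → ℂ :=
  kron (Epad Kp ηt) ((Lmat (Kp + 1)).mulVec (Epad Kp ηr))

/-- `u_2 = (L·Ẽ_tx) ⊗ Ẽ_rx`. -/
noncomputable def u2 (Kp : ℕ) (ηt ηr : Fin Kp → ℝ) : Fin (Kp + 2) × Fin (Kp + 2) → ℂ :=
  kron ((Lmat (Kp + 1)).mulVec (Epad Kp ηt)) (Epad Kp ηr)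

/-- `u_3 = (L·Ẽ_tx) ⊗ (L·Ẽ_rx)`. -/
noncomputable def u3 (Kp : ℕ) (ηt ηr : Fin Kp → ℝ) : Fin (Kp + 2) × Fin (Kp + 2) → ℂ :=
  kron ((Lmat (Kp + 1)).mulVec (Epad Kp ηt)) ((Lmat (Kp + 1)).mulVec (Epad Kp ηr))

/-- The noiseless auto-correlation matrix `R = Σ_{k=1}^K σ_k² A_k A_k^†`, where
`A_k = a(ε_tx,k) ⊗ a(ε_rx,k)` and `σsq k` is the power `σ_k²`. -/
noncomputable def Rmat (K : ℕ) (εtx εrx σsq : Fin K → ℝ) :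
    Matrix (Fin (K + 1) × Fin (K + 1)) (Fin (K + 1) × Fin (K + 1)) ℂ :=
  Matrix.of fun p q => ∑ k, (σsq k : ℂ) *
    kron (steer K (εtx k)) (steer K (εrx k)) p *
    (starRingEnd ℂ) (kron (steer K (εtx k)) (steer K (εrx k)) q)

/-- The rank-one matrix `R_ε = a(ε) a(ε)^† ∈ ℂ^{(Kp+2)×(Kp+2)}`. -/
noncomputable def Rsingle (Kp : ℕ) (ε : ℝ) : Matrix (Fin (Kp + 2)) (Fin (Kp + 2)) ℂ :=
  Matrix.of fun i l => steer (Kp + 1) ε i * (starRingEnd ℂ) (steer (Kp + 1) ε l)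

/-- The iDEA cost `Q_tx(φ) = (u_1 − exp(j·φ)·u_3)^† R (u_1 − exp(j·φ)·u_3)`. -/
noncomputable def Qcost (Kp : ℕ) (εtx εrx σsq : Fin (Kp + 1) → ℝ)
    (ηt ηr : Fin Kp → ℝ) (φ : ℝ) : ℂ :=
  qf (u1 Kp ηt ηr - Complex.exp (Complex.I * (φ : ℂ)) • u3 Kp ηt ηr)
    (Rmat (Kp + 1) εtx εrx σsq)
    (u1 Kp ηt ηr - Complex.exp (Complex.I * (φ : ℂ)) • u3 Kp ηt ηr)

/-- The closed-form value `4^{2K−1} · Σ_k σ_k² sin²((ε_tx,k − φ)/2) ∏_m sin²((ε_tx,k − ε̂_tx,m)/2)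
∏_n sin²((ε_rx,k − ε̂_rx,n)/2)` (here `K = Kp + 1`, so `2K − 1 = 2·Kp + 1`). -/
noncomputable def Ssum (Kp : ℕ) (εtx εrx σsq : Fin (Kp + 1) → ℝ)
    (ηt ηr : Fin Kp → ℝ) (φ : ℝ) : ℝ :=
  (4 : ℝ) ^ (2 * Kp + 1) * ∑ k, σsq k * Real.sin ((εtx k - φ) / 2) ^ 2 *
    (∏ m, Real.sin ((εtx k - ηt m) / 2) ^ 2) *
    (∏ n, Real.sin ((εrx k - ηr n) / 2) ^ 2)

/-- The `k = K` term of `Ssum`, i.e. the lower bound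
`4^{2K−1} · σ_K² sin²((ε_tx,K − φ)/2) ∏_m sin²((ε_tx,K − ε̂_tx,m)/2) ∏_n sin²((ε_rx,K − ε̂_rx,n)/2)`. -/
noncomputable def Slb (Kp : ℕ) (εtx εrx σsq : Fin (Kp + 1) → ℝ)
    (ηt ηr : Fin Kp → ℝ) (φ : ℝ) : ℝ :=
  (4 : ℝ) ^ (2 * Kp + 1) * σsq (Fin.last Kp) *
    Real.sin ((εtx (Fin.last Kp) - φ) / 2) ^ 2 *
    (∏ m, Real.sin ((εtx (Fin.last Kp) - ηt m) / 2) ^ 2) *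
    (∏ n, Real.sin ((εrx (Fin.last Kp) - ηr n) / 2) ^ 2)

/-- Entries of the conjugated steering vector are powers. -/
lemma conj_steer (n : ℕ) (ε : ℝ) (i : Fin (n + 1)) :
    (starRingEnd ℂ) (steer n ε i) = Complex.exp (-(Complex.I * (ε : ℂ))) ^ (i : ℕ) := by
  unfold steer
  rw [← Complex.exp_conj, ← Complex.exp_nat_mul]
  congr 1
  simp
  ring

lemma ip_steer_snoc (n : ℕ) (ε : ℝ) (v : Fin (n + 1) → ℂ) :
    ip (steer (n + 1) ε) (Fin.snoc (α := fun _ => ℂ) v 0) =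
      ∑ i : Fin (n + 1), Complex.exp (-(Complex.I * (ε : ℂ))) ^ (i : ℕ) * v i := by
  unfold ip
  simp only [conj_steer]
  rw [Fin.sum_univ_castSucc]
  simp

lemma ip_steer_cons (n : ℕ) (ε : ℝ) (v : Fin (n + 1) → ℂ) :
    ip (steer (n + 1) ε) (Fin.cons (α := fun _ => ℂ) 0 v) =
      Complex.exp (-(Complex.I * (ε : ℂ))) *
        ∑ i : Fin (n + 1), Complex.exp (-(Complex.I * (ε : ℂ))) ^ (i : ℕ) * v i := by
  unfold ip
  simp only [conj_steer]
  rw [Fin.sum_univ_succ, Finset.mul_sum]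
  simp [pow_succ']
  refine Finset.sum_congr rfl fun i _ => by ring

lemma sum_Evec (m : ℕ) (η : Fin m → ℝ) (t : ℂ) :
    ∑ i : Fin (m + 1), t ^ (i : ℕ) * Evec m η i =
      ∏ k, (1 - Complex.exp (Complex.I * (η k : ℂ)) * t) := by
  induction m with
  | zero => simp [Evec]
  | succ m ih =>
    rw [Fin.prod_univ_castSucc, ← ih (fun j => η j.castSucc)]
    simp only [Evec, mul_sub, Finset.sum_sub_distrib]
    rw [Fin.sum_univ_castSucc (n := m + 1)]
    rw [Fin.sum_univ_succ (n := m + 1)]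
    simp only [Fin.snoc_castSucc, Fin.snoc_last, Fin.cons_zero, Fin.cons_succ, Fin.val_castSucc,
      Fin.val_succ, mul_zero, add_zero, zero_add, mul_one, Finset.sum_mul]
    congr 1
    refine Finset.sum_congr rfl fun i _ => by ring

lemma Lmat_Epad (m : ℕ) (η : Fin m → ℝ) :
    (Lmat (m + 1)).mulVec (Epad m η) = Fin.cons (α := fun _ => ℂ) 0 (Evec m η) := by
  funext i
  have h : (Lmat (m + 1)).mulVec (Epad m η) i = Epad m η (i - 1) := by
    simp [Matrix.mulVec, dotProduct, Lmat]
  rw [h]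
  refine Fin.cases ?_ (fun j => ?_) i
  · have : (0 - 1 : Fin (m + 2)) = Fin.last (m + 1) := by
      rw [sub_eq_iff_eq_add]; simp
    rw [this]; simp [Epad]
  · have : (j.succ - 1 : Fin (m + 2)) = j.castSucc := by
      rw [sub_eq_iff_eq_add]; simp
    rw [this]; simp [Epad]

lemma ip_conj {n : Type*} [Fintype n] (x y : n → ℂ) : ip x y = (starRingEnd ℂ) (ip y x) := by
  simp [ip, map_sum, mul_comm]

lemma ip_kron {a b : Type*} [Fintype a] [Fintype b] (x z : a → ℂ) (y w : b → ℂ) :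
    ip (kron x y) (kron z w) = ip x z * ip y w := by
  simp only [ip, kron, Fintype.sum_prod_type, Finset.sum_mul_sum, map_mul]
  refine Finset.sum_congr rfl fun i _ => Finset.sum_congr rfl fun j _ => by ring

lemma qf_Rmat (K : ℕ) (εtx εrx σsq : Fin K → ℝ) (x y : Fin (K + 1) × Fin (K + 1) → ℂ) :
    qf x (Rmat K εtx εrx σsq) y = ∑ k, (σsq k : ℂ) *
      ip x (kron (steer K (εtx k)) (steer K (εrx k))) *
      ip (kron (steer K (εtx k)) (steer K (εrx k))) y := by
  simp only [qf, Rmat, Matrix.of_apply, ip, mul_assoc]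
  simp only [Finset.mul_sum, Finset.sum_mul]
  rw [Finset.sum_comm' (t' := Finset.univ) (s' := fun _ => Finset.univ) (by simp)]
  rw [Finset.sum_comm_cycle]
  refine Finset.sum_congr rfl fun k _ => ?_
  refine Finset.sum_congr rfl fun i _ => Finset.sum_congr rfl fun j _ => by ring

/-- Corollary 1, eq. (16): if u_1^† R u_3 ≠ 0, then
exp(j·ε_tx,K) = (u_1^† R u_1) / (u_1^† R u_3). -/
theorem statement9 (Kp : ℕ) (hKp : 1 ≤ Kp) (εtx εrx : Fin (Kp + 1) → ℝ)
    (σsq : Fin (Kp + 1) → ℝ) (hσ : ∀ k, 0 < σsq k)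
    (hden : qf (u1 Kp (fun i => εtx i.castSucc) (fun i => εrx i.castSucc)) (Rmat (Kp + 1) εtx εrx σsq)
        (u3 Kp (fun i => εtx i.castSucc) (fun i => εrx i.castSucc)) ≠ 0) :
    Complex.exp (Complex.I * (εtx (Fin.last Kp) : ℂ)) =
      qf (u1 Kp (fun i => εtx i.castSucc) (fun i => εrx i.castSucc)) (Rmat (Kp + 1) εtx εrx σsq)
          (u1 Kp (fun i => εtx i.castSucc) (fun i => εrx i.castSucc)) /
        qf (u1 Kp (fun i => εtx i.castSucc) (fun i => εrx i.castSucc)) (Rmat (Kp + 1) εtx εrx σsq)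
          (u3 Kp (fun i => εtx i.castSucc) (fun i => εrx i.castSucc)) := by
  rw [eq_div_iff hden]
  simp only [qf_Rmat, u1, u3, ip_kron, Lmat_Epad, ip_steer_cons, Finset.mul_sum]
  refine Finset.sum_congr rfl fun k _ => ?_
  refine Fin.lastCases ?_ (fun j => ?_) k
  · have h : Complex.exp (Complex.I * (εtx (Fin.last Kp) : ℂ)) *
        Complex.exp (-(Complex.I * (εtx (Fin.last Kp) : ℂ))) = 1 := by
      rw [← Complex.exp_add]; simp
    simp only [← Finset.mul_sum]
    have h2 := ip_steer_snoc Kp (εtx (Fin.last Kp)) (Evec Kp fun i => εtx i.castSucc)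
    rw [← h2]
    change _ = _ * (ip _ (Epad Kp _) * _)
    unfold Epad
    generalize ip (Fin.snoc (Evec Kp fun i => εtx i.castSucc) 0)
      (steer (Kp + 1) (εtx (Fin.last Kp))) = p
    generalize ip (Fin.cons 0 (Evec Kp fun i => εrx i.castSucc))
      (steer (Kp + 1) (εrx (Fin.last Kp))) = q
    generalize ip (steer (Kp + 1) (εtx (Fin.last Kp)))
      (Fin.snoc (Evec Kp fun i => εtx i.castSucc) 0) = r
    generalize (Finset.sum (Finset.univ : Finset (Fin (Kp + 1))) _ : ℂ) = s
    linear_combination ((σsq (Fin.last Kp) : ℂ) * p * q * r *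
      Complex.exp (-(Complex.I * (εrx (Fin.last Kp) : ℂ))) * s) * h
  · have h : ip (Epad Kp fun i => εtx i.castSucc) (steer (Kp + 1) (εtx j.castSucc)) = 0 := by
      rw [ip_conj]
      unfold Epad
      rw [ip_steer_snoc, sum_Evec, Finset.prod_eq_zero (Finset.mem_univ j)]
      · simp
      · rw [← Complex.exp_add]; simp
    rw [h]
    simp
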